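/- arXiv:1810.11555 — 3 statements merged into one kernel-verified Lean document; each statement's English description precedes it below -/
import Mathlib

section
/- Let B be a finite-dimensional ℂ-algebra with a Frobenius system (E, (bᵢ)ᵢ∈I, (bᵢ^∨)ᵢ∈I) for B over ℂ such that E is symmetric, and let C = ∑ᵢ bᵢ^∨ * bᵢ. Then for every a ∈ B, the trace of the ℂ-linear endomorphism of B given by left multiplication by a equals E(C * a). -/
/-- For a symmetric Frobenius algebra `B` over `ℂ` with Frobenius system
`(E, (bᵢ), (bᵢ^∨))` and Casimir element `C = ∑ᵢ bᵢ^∨ * bᵢ`, the trace of left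
multiplication by `a` on `B` equals `E(C * a)`. -/
theorem trace_left_mul_eq_E_casimir_mul
    {B : Type*} [Ring B] [Algebra ℂ B] [FiniteDimensional ℂ B]
    {I : Type*} [Fintype I]
    (E : B →ₗ[ℂ] ℂ) (b bv : I → B)
    (hdual₁ : ∀ x : B, x = ∑ i, E (x * bv i) • b i)
    (hdual₂ : ∀ x : B, x = ∑ i, E (b i * x) • bv i)
    (hsymm : ∀ x y : B, E (x * y) = E (y * x)) :
    ∀ a : B, LinearMap.trace ℂ B (LinearMap.mulLeft ℂ a) = E ((∑ i, bv i * b i) * a) := by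
  intro a
  have h : LinearMap.mulLeft ℂ a =
      ∑ i, (E ∘ₗ LinearMap.mulLeft ℂ (b i * a)).smulRight (bv i) := by
    ext x
    rw [LinearMap.mulLeft_apply, hdual₂ (a * x)]
    simp [LinearMap.sum_apply, mul_assoc]
  rw [h, map_sum, Finset.sum_mul, map_sum]
  refine Finset.sum_congr rfl fun i _ => ?_
  rw [LinearMap.trace_smulRight, LinearMap.comp_apply, LinearMap.mulLeft_apply, hsymm, mul_assoc]
end

section
/- Let B be a finite-dimensional ℂ-algebra with a Frobenius system (E, (bᵢ)ᵢ∈I, (bᵢ^∨)ᵢ∈I) for B over ℂ such that E is symmetric, let C = ∑ᵢ bᵢ^∨ * bᵢ, and let e ∈ B be a central idempotent (e*e = e and e*x = x*e for all x ∈ B). Then for every a ∈ B, left multiplication by a maps the left ideal B*e = {x*e | x ∈ B} into itself, and the trace of the induced ℂ-linear endomorphism of B*e equals E(C * e * a). -/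
/-- For a symmetric Frobenius algebra `B` over `ℂ` with Frobenius system
`(E, (bᵢ), (bᵢ^∨))`, Casimir element `C = ∑ᵢ bᵢ^∨ * bᵢ`, and a central
idempotent `e`, left multiplication by any `a ∈ B` preserves the left ideal
`B*e = range (· * e)`, and the trace of the induced endomorphism of `B*e`
equals `E(C * e * a)`. -/
theorem trace_on_ideal_eq_E_casimir_idempotent
    {B : Type*} [Ring B] [Algebra ℂ B] [FiniteDimensional ℂ B]
    {I : Type*} [Fintype I]
    (E : B →ₗ[ℂ] ℂ) (b bv : I → B)
    (hdual₁ : ∀ x : B, x = ∑ i, E (x * bv i) • b i)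
    (hdual₂ : ∀ x : B, x = ∑ i, E (b i * x) • bv i)
    (hsymm : ∀ x y : B, E (x * y) = E (y * x))
    (e : B) (he : e * e = e) (hec : ∀ x : B, e * x = x * e) (a : B) :
    (∀ x ∈ LinearMap.range (LinearMap.mulRight ℂ e),
        a * x ∈ LinearMap.range (LinearMap.mulRight ℂ e)) ∧
    ∀ (h : ∀ x ∈ LinearMap.range (LinearMap.mulRight ℂ e),
        LinearMap.mulLeft ℂ a x ∈ LinearMap.range (LinearMap.mulRight ℂ e)),
      LinearMap.trace ℂ (LinearMap.range (LinearMap.mulRight ℂ e))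
          ((LinearMap.mulLeft ℂ a).restrict h) =
        E ((∑ i, bv i * b i) * e * a) := by
  have hmem : ∀ y : B, y * e ∈ LinearMap.range (LinearMap.mulRight ℂ e) := fun y => ⟨y, rfl⟩
  refine ⟨?_, ?_⟩
  · rintro x ⟨y, rfl⟩
    exact ⟨a * y, by simp [mul_assoc]⟩
  · intro h
    have key : (LinearMap.mulLeft ℂ a).restrict h =
        ∑ i, dualTensorHom ℂ (LinearMap.range (LinearMap.mulRight ℂ e))
          (LinearMap.range (LinearMap.mulRight ℂ e))
          (TensorProduct.tmul ℂ
            ((E ∘ₗ LinearMap.mulLeft ℂ (b i)) ∘ₗ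
              (LinearMap.range (LinearMap.mulRight ℂ e)).subtype)
            ⟨a * bv i * e, hmem _⟩) := by
      ext ⟨x, y, rfl⟩
      have h2 := hdual₂ (y * e)
      have h3 : a * (y * e) = a * (y * e) * e := by rw [mul_assoc, mul_assoc, he]
      simp only [LinearMap.restrict_coe_apply, LinearMap.mulLeft_apply, LinearMap.mulRight_apply,
        LinearMap.sum_apply, dualTensorHom_apply, LinearMap.comp_apply, Submodule.subtype_apply,
        Submodule.coe_sum, Submodule.coe_smul]
      rw [h3]
      conv_lhs => rw [h2]
      simp [Finset.mul_sum, Finset.sum_mul]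
    rw [key, map_sum]
    simp only [LinearMap.trace_eq_contract_apply, contractLeft_apply, LinearMap.comp_apply,
      Submodule.subtype_apply, LinearMap.mulLeft_apply, Finset.sum_mul, map_sum]
    refine Finset.sum_congr rfl fun i _ => ?_
    rw [hsymm (b i), hsymm (bv i * b i * e) a]
    simp only [mul_assoc, hec (b i)]
end

section
/- Let B be a finite-dimensional ℂ-algebra, A a subalgebra of B, (E, (bᵢ)ᵢ∈I, (bᵢ^∨)ᵢ∈I) a Frobenius system for B over A, and (E₀, (aⱼ)ⱼ∈J, (aⱼ^∨)ⱼ∈J) a Frobenius system for A over ℂ. Assume that E₀ is symmetric on A (E₀(u*v) = E₀(v*u) for all u, v ∈ A) and that the composite E₀ ∘ E is symmetric on B (E₀(E(x*y)) = E₀(E(y*x)) for all x, y ∈ B). Let Cᶦ = ∑ᵢ bᵢ * bᵢ^∨. Then for every x ∈ B satisfying x*a = a*x for all a ∈ A, the trace of the ℂ-linear endomorphism of B given by left multiplication by x equals the trace of the ℂ-linear endomorphism of A given by left multiplication by E(Cᶦ * x). -/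
theorem aux_trace_sum {V K : Type*} [AddCommGroup V] [Module ℂ V] [FiniteDimensional ℂ V]
    [Fintype K] (f : V →ₗ[ℂ] V) (φ : K → (V →ₗ[ℂ] ℂ)) (v : K → V)
    (h : ∀ y, f y = ∑ k, φ k y • v k) : LinearMap.trace ℂ V f = ∑ k, φ k (v k) := by
  have hf : f = ∑ k, dualTensorHom ℂ V V (φ k ⊗ₜ[ℂ] v k) := by
    ext y
    rw [h]
    simp [dualTensorHom_apply]
  rw [hf, map_sum]
  refine Finset.sum_congr rfl fun k _ => ?_
  rw [LinearMap.trace_eq_contract_apply, contractLeft_apply]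

/-- Let `B` be a finite-dimensional `ℂ`-algebra, `A ⊆ B` a subalgebra with a
Frobenius system `(E, (bᵢ), (bᵢ^∨))` for `B` over `A`, and `(E₀, (aⱼ), (aⱼ^∨))`
a Frobenius system for `A` over `ℂ`, with `E₀` symmetric on `A` and `E₀ ∘ E`
symmetric on `B`. Let `Cᶦ = ∑ᵢ bᵢ * bᵢ^∨`. Then for any `x` in the centralizer
`Z(B,A)`, the trace of left multiplication by `x` on `B` equals the trace of
left multiplication by `E(Cᶦ * x)` on `A`. -/
theorem trace_centralizer_eq_trace_E_iota_casimir
    {B : Type*} [Ring B] [Algebra ℂ B] [FiniteDimensional ℂ B]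
    (A : Subalgebra ℂ B)
    {I J : Type*} [Fintype I] [Fintype J]
    (E : B →ₗ[ℂ] A) (b bv : I → B)
    (hEl : ∀ (a : A) (x : B), E ((a : B) * x) = a * E x)
    (hEr : ∀ (a : A) (x : B), E (x * (a : B)) = E x * a)
    (hdual₁ : ∀ x : B, x = ∑ i, (E (x * bv i) : B) * b i)
    (hdual₂ : ∀ x : B, x = ∑ i, bv i * (E (b i * x) : B))
    (E₀ : A →ₗ[ℂ] ℂ) (av avv : J → A)
    (hdual₁' : ∀ u : A, u = ∑ j, E₀ (u * avv j) • av j)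
    (hdual₂' : ∀ u : A, u = ∑ j, E₀ (av j * u) • avv j)
    (hsymm₀ : ∀ u v : A, E₀ (u * v) = E₀ (v * u))
    (hsymm : ∀ x y : B, E₀ (E (x * y)) = E₀ (E (y * x)))
    (x : B) (hx : ∀ c : A, x * (c : B) = (c : B) * x) :
    LinearMap.trace ℂ B (LinearMap.mulLeft ℂ x) =
      LinearMap.trace ℂ A (LinearMap.mulLeft ℂ (E ((∑ i, b i * bv i) * x))) := by
  have hB := aux_trace_sum (LinearMap.mulLeft ℂ x)
    (fun k : I × J => E₀ ∘ₗ E ∘ₗ LinearMap.mulLeft ℂ x ∘ₗ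
      LinearMap.mulRight ℂ (bv k.1 * (avv k.2 : B)))
    (fun k => (av k.2 : B) * b k.1) (by
      intro y
      rw [LinearMap.mulLeft_apply, Fintype.sum_prod_type]
      conv_lhs => rw [hdual₁ (x * y)]
      refine Finset.sum_congr rfl fun i _ => ?_
      conv_lhs => rw [hdual₁' (E (x * y * bv i))]
      rw [AddSubmonoidClass.coe_finset_sum, Finset.sum_mul]
      refine Finset.sum_congr rfl fun j _ => ?_
      rw [← hEr]
      simp [mul_assoc])
  have hA := aux_trace_sum (LinearMap.mulLeft ℂ (E ((∑ i, b i * bv i) * x)))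
    (fun j : J => E₀ ∘ₗ LinearMap.mulLeft ℂ (av j * E ((∑ i, b i * bv i) * x)))
    avv (by
      intro y
      rw [LinearMap.mulLeft_apply]
      conv_lhs => rw [hdual₂' (_ * y)]
      simp only [LinearMap.comp_apply, LinearMap.mulLeft_apply, mul_assoc])
  rw [hB, hA, Fintype.sum_prod_type, Finset.sum_comm]
  refine Finset.sum_congr rfl fun j _ => ?_
  simp only [LinearMap.comp_apply, LinearMap.mulLeft_apply, LinearMap.mulRight_apply]
  have e : av j * E ((∑ i, b i * bv i) * x) * avv j
      = E ((av j : B) * ((∑ i, b i * bv i) * x) * (avv j : B)) := by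
    rw [hEr, hEl]
  rw [e, Finset.sum_mul, Finset.mul_sum, Finset.sum_mul, map_sum, map_sum]
  refine Finset.sum_congr rfl fun i _ => ?_
  rw [hsymm]
  congr 2
  simp only [mul_assoc]
  rw [hx]
end
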